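/- Let F be a group with normal subgroups R1, R2, R3. Let a1 ∈ R1, b1 ∈ R2 with a1·b1 ∈ R3, and let a2 ∈ R1 ⊓ R2. Then [a1·a2, b1^{a2}·a2⁻¹] ≡ [a1, b1] modulo [R3, R1 ⊓ R2]; that is, [a1 a2, a2⁻¹ b1 a2 a2⁻¹]·[a1, b1]⁻¹ ∈ [R3, R1 ⊓ R2]. -/

import Mathlib

theorem stmt_5 {F : Type*} [Group F] (R1 R2 R3 : Subgroup F)
    [R1.Normal] [R2.Normal] [R3.Normal]
    (a1 b1 a2 : F) (ha1 : a1 ∈ R1) (hb1 : b1 ∈ R2)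
    (hab : a1 * b1 ∈ R3) (ha2 : a2 ∈ R1 ⊓ R2) :
    ((a1 * a2)⁻¹ * (a2⁻¹ * b1 * a2 * a2⁻¹)⁻¹ * (a1 * a2) * (a2⁻¹ * b1 * a2 * a2⁻¹)) *
      (a1⁻¹ * b1⁻¹ * a1 * b1)⁻¹ ∈ (⁅R3, R1 ⊓ R2⁆ : Subgroup F) := by
  have hba : b1 * a1 ∈ R3 := Subgroup.Normal.mem_comm inferInstance hab
  rw [Subgroup.commutator_comm]
  convert Subgroup.commutator_mem_commutator (inv_mem ha2) (inv_mem hba) using 1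
  rw [commutatorElement_def]
  group
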